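/- For real numbers a \notin \{0, 1\} and c, define the normalized Meixner polynomials \mathsf{m}_n^{a,c}(x) = \frac{1}{n!} \sum_{j=0}^n (c+j)_{n-j} \, (1 - 1/a)^{j-n} \binom{n}{j} \binom{x}{j} j!. Then for all natural numbers n, m, every real c and every real x: \det\big( \mathsf{m}^{a, c-n-m}_{m+j-1}(x+i-1) \big)_{i,j=1}^n = (-1)^{nm} \det\big( \mathsf{m}^{a, 2-c}_{n+j-1}(-x+i-1) \big)_{i,j=1}^m, where the determinant of a 0\times 0 matrix equals 1. -/

import Mathlib

/-- The generalized binomial coefficient `x choose j = x(x-1)⋯(x-j+1)/j!`. -/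
noncomputable def gbinom (x : ℝ) (j : ℕ) : ℝ :=
  (∏ k ∈ Finset.range j, (x - k)) / j.factorial

/-- The Pochhammer symbol `(y)_l = y (y+1) ⋯ (y+l-1)`. -/
noncomputable def poch (y : ℝ) (l : ℕ) : ℝ := ∏ k ∈ Finset.range l, (y + k)

/-- The normalized Meixner polynomial
`m_n^{a,c}(x) = (1/n!) ∑_{j=0}^n (c+j)_{n-j} (1-1/a)^{j-n} C(n,j) C(x,j) j!`. -/
noncomputable def meixner (a c : ℝ) (n : ℕ) (x : ℝ) : ℝ :=
  (1 / n.factorial) * ∑ j ∈ Finset.range (n + 1),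
    poch (c + j) (n - j) * (1 - 1 / a) ^ ((j : ℤ) - n) * (n.choose j : ℝ) *
      gbinom x j * j.factorial

/-!
The Meixner polynomials have the generating function
`∑ m_n^{a,c}(x) t^n = (1 - b t)^(-c) (1 + u)^x`, where `b = (1 - 1/a)⁻¹` and `u = t / (1 - b t)`.
Replacing `x` by `x + i` multiplies it by `(1 + u)^i`, and the rows `(1 + u)^i`, `i < n`, may be
traded for `u^i` and then for `t^i / (1 - b t)^(n-1)` by unimodular row operations. So the Casorati
determinant is a minor of the Toeplitz matrix of `(1 - b t)^(-c-n+1) (1 + u)^x`. The Toeplitz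
matrices belonging to the two sides of the theorem are inverse to each other, and Jacobi's
complementary minor theorem relates the two minors.
-/

open PowerSeries

section ComplementaryMinor

open Matrix

variable {R m n : Type*} [CommRing R] [Fintype m] [Fintype n] [DecidableEq m] [DecidableEq n]

/-- **Jacobi's complementary minor theorem**, for the leading block of an invertible matrix. -/
theorem det_toBlocks₁₁_of_mul_eq_one {A B : Matrix (m ⊕ n) (m ⊕ n) R} (h : A * B = 1) :
    A.toBlocks₁₁.det = A.det * B.toBlocks₂₂.det := by
  have hblocks : fromBlocks A.toBlocks₁₁ A.toBlocks₁₂ A.toBlocks₂₁ A.toBlocks₂₂ *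
      fromBlocks B.toBlocks₁₁ B.toBlocks₁₂ B.toBlocks₂₁ B.toBlocks₂₂ = fromBlocks 1 0 0 1 := by
    rw [fromBlocks_toBlocks, fromBlocks_toBlocks, h, fromBlocks_one]
  rw [fromBlocks_multiply, fromBlocks_inj] at hblocks
  obtain ⟨-, h₁₂, -, h₂₂⟩ := hblocks
  have hmul : A * fromBlocks 1 B.toBlocks₁₂ 0 B.toBlocks₂₂ =
      fromBlocks A.toBlocks₁₁ 0 A.toBlocks₂₁ 1 := by
    conv_lhs => rw [← fromBlocks_toBlocks A]
    simp only [fromBlocks_multiply, Matrix.mul_one, Matrix.mul_zero, add_zero, h₁₂, h₂₂]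
  simpa only [det_mul, det_fromBlocks_zero₂₁, det_fromBlocks_zero₁₂, det_one, one_mul, mul_one]
    using (congrArg det hmul).symm

end ComplementaryMinor

section BlockSwap

/-- The permutation of `Fin (n + m)` exchanging the block of the first `n` indices with the block
of the last `m` indices; it selects the columns of a Toeplitz minor. -/
def blockSwap (n m : ℕ) : Equiv.Perm (Fin (n + m)) :=
  finAddFlip.trans (finCongr (add_comm m n))

lemma val_blockSwap_castAdd {n : ℕ} (m : ℕ) (i : Fin n) :
    (blockSwap n m (Fin.castAdd m i) : ℕ) = m + i := by
  simp [blockSwap, add_comm]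

lemma val_blockSwap_natAdd (n : ℕ) {m : ℕ} (i : Fin m) :
    (blockSwap n m (Fin.natAdd n i) : ℕ) = i := by
  simp [blockSwap]

lemma val_finRotate_pow (N k : ℕ) (p : Fin N) :
    ((finRotate N ^ k) p : ℕ) = (p + k) % N := by
  induction k with
  | zero => simp [Nat.mod_eq_of_lt p.2]
  | succ k ih =>
    have := p.neZero
    rw [pow_succ', Equiv.Perm.mul_apply, finRotate_apply, Fin.val_add, ih, Fin.val_one',
      ← Nat.add_mod, add_assoc]

lemma blockSwap_eq_finRotate_pow (n m : ℕ) : blockSwap n m = finRotate (n + m) ^ m := by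
  ext p
  rw [val_finRotate_pow]
  refine Fin.addCases (fun i => ?_) (fun i => ?_) p
  · rw [val_blockSwap_castAdd, Fin.val_castAdd, Nat.mod_eq_of_lt (by omega), add_comm]
  · rw [val_blockSwap_natAdd, Fin.val_natAdd, show n + (i : ℕ) + m = i + (n + m) by ring,
      Nat.add_mod_right, Nat.mod_eq_of_lt (by omega)]

lemma sign_blockSwap (n m : ℕ) : Equiv.Perm.sign (blockSwap n m) = (-1) ^ (n * m) := by
  rw [blockSwap_eq_finRotate_pow, map_pow, sign_finRotate, ← pow_mul]
  rcases m with _ | k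
  · simp
  · have : (n + (k + 1) - 1) * (k + 1) = n * (k + 1) + k * (k + 1) := by
      rw [← add_assoc, Nat.add_sub_cancel, add_mul]
    rw [this, pow_add, (Nat.even_mul_succ_self k).neg_one_pow, mul_one]

end BlockSwap

section Toeplitz

open Matrix

variable {R : Type*} [CommRing R]

/-- The `N × N` upper triangular Toeplitz matrix of a power series, that is, the matrix of
multiplication by `G` modulo `X ^ N`, acting on row vectors. -/
noncomputable def upperToeplitz (N : ℕ) (G : R⟦X⟧) : Matrix (Fin N) (Fin N) R :=
  .of fun i j => coeff j (X ^ (i : ℕ) * G)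

lemma isUpperTriangular_upperToeplitz (N : ℕ) (G : R⟦X⟧) :
    (upperToeplitz N G).IsUpperTriangular := by
  intro i j hij
  have : ¬ (i : ℕ) ≤ j := by simpa using hij
  simp only [upperToeplitz, of_apply, coeff_X_pow_mul', if_neg this]

lemma det_upperToeplitz (N : ℕ) (G : R⟦X⟧) :
    (upperToeplitz N G).det = constantCoeff G ^ N := by
  rw [det_of_isUpperTriangular (isUpperTriangular_upperToeplitz N G)]
  simp [upperToeplitz, coeff_X_pow_mul']

lemma upperToeplitz_one (N : ℕ) : upperToeplitz N (1 : R⟦X⟧) = 1 := by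
  ext i j
  simp [upperToeplitz, coeff_X_pow, Matrix.one_apply, Fin.ext_iff, eq_comm]

lemma upperToeplitz_mul (N : ℕ) (G F : R⟦X⟧) :
    upperToeplitz N (G * F) = upperToeplitz N G * upperToeplitz N F := by
  ext i j
  simp only [mul_apply, upperToeplitz, of_apply]
  rw [Fin.sum_univ_eq_sum_range
    (fun k => coeff k (X ^ (i : ℕ) * G) * coeff (j : ℕ) (X ^ k * F)) N, ← mul_assoc,
    coeff_mul, Finset.Nat.sum_antidiagonal_eq_sum_range_succ_mk]
  refine Finset.sum_subset_zero_on_sdiff (Finset.range_subset_range.2 j.2) ?_ ?_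
  · intro k hk
    have : ¬ k ≤ (j : ℕ) := by simp at hk; omega
    rw [coeff_X_pow_mul' F, if_neg this, mul_zero]
  · intro k hk
    rw [coeff_X_pow_mul' F, if_pos (Finset.mem_range_succ_iff.1 hk)]

/-- If `G = ∑ hⱼ Xʲ` and `F = ∑ (-1)ʲ eⱼ Xʲ`, these are the two Jacobi–Trudi determinants of the
Schur function of an `n × m` rectangle. -/
theorem det_coeff_X_pow_mul_of_mul_eq_one (n m : ℕ) {G F : R⟦X⟧} (h : G * F = 1) :
    (of fun i j : Fin n => coeff (m + (j : ℕ)) (X ^ (i : ℕ) * G)).det =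
      (-1) ^ (n * m) * constantCoeff G ^ (n + m) *
        (of fun i j : Fin m => coeff (n + (j : ℕ)) (X ^ (i : ℕ) * F)).det := by
  let e : Fin n ⊕ Fin m ≃ Fin (n + m) := finSumFinEquiv
  let σ := blockSwap n m
  let A := (upperToeplitz (n + m) G).submatrix e (e.trans σ)
  let B := (upperToeplitz (n + m) F).submatrix (e.trans σ) e
  have hAB : A * B = 1 := by
    rw [submatrix_mul_equiv, ← upperToeplitz_mul, h, upperToeplitz_one, submatrix_one_equiv]
  have hdetA : A.det = (-1) ^ (n * m) * constantCoeff G ^ (n + m) := by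
    have : A = ((upperToeplitz (n + m) G).submatrix id σ).submatrix e e := rfl
    rw [this, det_submatrix_equiv_self, det_permute', sign_blockSwap, det_upperToeplitz]
    push_cast
    rfl
  have hA : A.toBlocks₁₁ = of fun i j : Fin n => coeff (m + (j : ℕ)) (X ^ (i : ℕ) * G) := by
    ext i j
    simp [A, e, σ, toBlocks₁₁, upperToeplitz, val_blockSwap_castAdd]
  have hB : B.toBlocks₂₂ = of fun i j : Fin m => coeff (n + (j : ℕ)) (X ^ (i : ℕ) * F) := by
    ext i j
    simp [B, e, σ, toBlocks₂₂, upperToeplitz, val_blockSwap_natAdd]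
  rw [← hA, ← hB, ← hdetA, det_toBlocks₁₁_of_mul_eq_one hAB]

end Toeplitz

section RowOperations

open Matrix

variable {R S : Type*} [CommRing R] [Semiring S] [Algebra R S] {n : ℕ}

theorem det_aeval_mul {p : Fin n → Polynomial R} (hp : ∀ i, (p i).natDegree < n)
    (φ : Fin n → S →ₗ[R] R) (u h : S) :
    (of fun i j => φ j (Polynomial.aeval u (p i) * h)).det =
      (of fun i k : Fin n => (p i).coeff k).det *
        (of fun i j : Fin n => φ j (u ^ (i : ℕ) * h)).det := by
  rw [← det_mul]
  congr 1
  ext i j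
  simp only [of_apply, mul_apply, Polynomial.aeval_eq_sum_range' (hp i), Finset.sum_mul,
    smul_mul_assoc, map_sum, map_smul, smul_eq_mul]
  exact (Fin.sum_univ_eq_sum_range (fun k => (p i).coeff k * φ j (u ^ k * h)) n).symm

theorem det_one_add_pow_mul (φ : Fin n → S →ₗ[R] R) (u h : S) :
    (of fun i j : Fin n => φ j ((1 + u) ^ (i : ℕ) * h)).det =
      (of fun i j : Fin n => φ j (u ^ (i : ℕ) * h)).det := by
  let p (i : Fin n) : Polynomial R := (1 + .X) ^ (i : ℕ)
  have hp (i : Fin n) : (p i).natDegree < n := by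
    have : (p i).natDegree ≤ i * 1 :=
      Polynomial.natDegree_pow_le_of_le _ (by compute_degree)
    omega
  have hdet : (of fun i k : Fin n => (p i).coeff k).det = 1 := by
    rw [det_of_isLowerTriangular]
    · simp [p, Polynomial.coeff_one_add_X_pow]
    · intro i k hik
      have : (i : ℕ) < k := by simpa using hik
      simp [p, Polynomial.coeff_one_add_X_pow, Nat.choose_eq_zero_of_lt this]
  simpa [p, hdet] using det_aeval_mul hp φ u h

theorem det_pow_mul_aeval_mul {q : Fin n → Polynomial R} (hq₀ : ∀ i, (q i).coeff 0 = 1)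
    (hq : ∀ i, (q i).natDegree ≤ n - 1 - i) (φ : Fin n → S →ₗ[R] R) (u h : S) :
    (of fun i j : Fin n => φ j (u ^ (i : ℕ) * Polynomial.aeval u (q i) * h)).det =
      (of fun i j : Fin n => φ j (u ^ (i : ℕ) * h)).det := by
  have hdeg (i : Fin n) : (.X ^ (i : ℕ) * q i : Polynomial R).natDegree < n := by
    have : (.X ^ (i : ℕ) * q i : Polynomial R).natDegree ≤ i + (n - 1 - i) :=
      Polynomial.natDegree_mul_le_of_le (Polynomial.natDegree_X_pow_le _) (hq i)
    omega
  have hdet : (of fun i k : Fin n => (.X ^ (i : ℕ) * q i : Polynomial R).coeff k).det = 1 := by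
    rw [det_of_isUpperTriangular]
    · simp [Polynomial.coeff_X_pow_mul', hq₀]
    · intro i k hki
      have : ¬ (i : ℕ) ≤ k := by simpa using hki
      simp only [of_apply, Polynomial.coeff_X_pow_mul', if_neg this]
  simpa only [hdet, one_mul, map_mul, map_pow, Polynomial.aeval_X] using det_aeval_mul hdeg φ u h

end RowOperations

section OneAddPow

variable {R : Type*} [CommRing R] [BinomialRing R]

/-- The power `(1 + f) ^ x` with exponent `x` in a binomial ring, obtained by substituting `f` into
the binomial series. It is meaningful only if `f` may be substituted, for instance if `f` has
constant coefficient zero. -/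
noncomputable def oneAddPow (f : R⟦X⟧) (x : R) : R⟦X⟧ := (binomialSeries R x).subst f

variable {f : R⟦X⟧}

lemma oneAddPow_add (hf : HasSubst f) (x y : R) :
    oneAddPow f (x + y) = oneAddPow f x * oneAddPow f y := by
  rw [oneAddPow, binomialSeries_add, subst_mul hf, oneAddPow, oneAddPow]

lemma oneAddPow_natCast (hf : HasSubst f) (d : ℕ) : oneAddPow f (d : R) = (1 + f) ^ d := by
  rw [oneAddPow, binomialSeries_nat, ← coe_substAlgHom hf, map_pow, map_add, map_one,
    substAlgHom_X hf]

lemma oneAddPow_zero (hf : HasSubst f) : oneAddPow f (0 : R) = 1 := by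
  simpa using oneAddPow_natCast hf 0

lemma oneAddPow_pow (hf : HasSubst f) (x : R) (k : ℕ) :
    oneAddPow f x ^ k = oneAddPow f (k * x) := by
  induction k with
  | zero => simp [oneAddPow_zero hf]
  | succ k ih => rw [pow_succ, ih, ← oneAddPow_add hf, Nat.cast_succ, add_one_mul]

lemma coeff_oneAddPow (hf : constantCoeff f = 0) (x : R) {k n : ℕ} (hkn : k ≤ n) :
    coeff k (oneAddPow f x) = ∑ j ∈ Finset.range (n + 1), Ring.choose x j * coeff k (f ^ j) := by
  have hvanish (j : ℕ) (hj : n < j) : coeff k (f ^ j) = 0 :=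
    X_pow_dvd_iff.1 (pow_dvd_pow_of_dvd (X_dvd_iff.2 hf) j) k (hkn.trans_lt hj)
  rw [oneAddPow, coeff_subst' (.of_constantCoeff_zero' hf),
    finsum_eq_sum_of_support_subset (s := Finset.range (n + 1))]
  · simp
  · intro j hj
    by_contra hjn
    exact hj (by simp only [hvanish j (by simpa using hjn), smul_zero])

lemma constantCoeff_oneAddPow (hf : constantCoeff f = 0) (x : R) :
    constantCoeff (oneAddPow f x) = 1 := by
  rw [← coeff_zero_eq_constantCoeff_apply, coeff_oneAddPow hf x le_rfl]
  simp

lemma coeff_mul_oneAddPow (hf : constantCoeff f = 0) (g : R⟦X⟧) (x : R) (n : ℕ) :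
    coeff n (g * oneAddPow f x) =
      ∑ j ∈ Finset.range (n + 1), Ring.choose x j * coeff n (g * f ^ j) := by
  simp only [coeff_mul, Finset.mul_sum]
  rw [Finset.sum_comm]
  refine Finset.sum_congr rfl fun p hp => ?_
  rw [coeff_oneAddPow hf x (Finset.HasAntidiagonal.antidiagonal.snd_le hp), Finset.mul_sum]
  exact Finset.sum_congr rfl fun j _ => mul_left_comm _ _ _

lemma coeff_oneAddPow_smul_X (b y : R) (k : ℕ) :
    coeff k (oneAddPow (b • X) y) = b ^ k * Ring.choose y k := by
  simp [oneAddPow, ← rescale_eq_subst, coeff_rescale]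

end OneAddPow

section MeixnerGen

open Matrix

variable {R : Type*} [CommRing R] [BinomialRing R]

/-- The power series `X / (1 - b X)`. -/
noncomputable def xDivOneSub (b : R) : R⟦X⟧ := X * oneAddPow (-b • X) (-1)

/-- The generating function `(1 - b X) ^ (-c) * (1 + X / (1 - b X)) ^ x` of the normalized Meixner
polynomials, with `b = (1 - 1 / a)⁻¹`. -/
noncomputable def meixnerGen (b c x : R) : R⟦X⟧ :=
  oneAddPow (-b • X) (-c) * oneAddPow (xDivOneSub b) x

lemma xDivOneSub_pow (b : R) (k : ℕ) :
    xDivOneSub b ^ k = X ^ k * oneAddPow (-b • X) (-(k : R)) := by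
  rw [xDivOneSub, mul_pow, oneAddPow_pow (.smul_X' _), mul_neg_one]

lemma constantCoeff_xDivOneSub (b : R) : constantCoeff (xDivOneSub b) = 0 := by
  simp [xDivOneSub]

lemma hasSubst_xDivOneSub (b : R) : HasSubst (xDivOneSub b) :=
  .of_constantCoeff_zero' (constantCoeff_xDivOneSub b)

lemma constantCoeff_meixnerGen (b c x : R) : constantCoeff (meixnerGen b c x) = 1 := by
  rw [meixnerGen, map_mul, constantCoeff_oneAddPow (by simp),
    constantCoeff_oneAddPow (constantCoeff_xDivOneSub b), mul_one]

lemma meixnerGen_mul_meixnerGen (b c d x y : R) :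
    meixnerGen b c x * meixnerGen b d y = meixnerGen b (c + d) (x + y) := by
  rw [meixnerGen, meixnerGen, mul_mul_mul_comm, ← oneAddPow_add (.smul_X' _),
    ← oneAddPow_add (hasSubst_xDivOneSub b), ← neg_add, meixnerGen]

lemma meixnerGen_zero_zero (b : R) : meixnerGen b 0 0 = 1 := by
  rw [meixnerGen, neg_zero, oneAddPow_zero (.smul_X' _), oneAddPow_zero (hasSubst_xDivOneSub b),
    mul_one]

lemma meixnerGen_add_natCast (b c x : R) (i : ℕ) :
    meixnerGen b c (x + i) = (1 + xDivOneSub b) ^ i * meixnerGen b c x := by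
  rw [meixnerGen, oneAddPow_add (hasSubst_xDivOneSub b),
    oneAddPow_natCast (hasSubst_xDivOneSub b), meixnerGen]
  ring

lemma xDivOneSub_pow_mul_meixnerGen (b c x : R) (k d : ℕ) :
    xDivOneSub b ^ k * meixnerGen b c x =
      X ^ k * (1 + -b • X) ^ d * meixnerGen b (c + k + d) x := by
  have : oneAddPow (-b • X) (-(k : R)) * oneAddPow (-b • X) (-c) =
      oneAddPow (-b • X) (d : R) * oneAddPow (-b • X) (-(c + k + d)) := by
    rw [← oneAddPow_add (.smul_X' _), ← oneAddPow_add (.smul_X' _)]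
    congr 1
    ring
  rw [xDivOneSub_pow, meixnerGen, meixnerGen, ← oneAddPow_natCast (.smul_X' _)]
  linear_combination (X ^ k * oneAddPow (xDivOneSub b) x) * this

theorem det_coeff_meixnerGen_add_natCast (b c x : R) (n m : ℕ) :
    (of fun i j : Fin n => coeff (m + (j : ℕ)) (meixnerGen b c (x + (i : ℕ)))).det =
      (of fun i j : Fin n =>
        coeff (m + (j : ℕ)) (X ^ (i : ℕ) * meixnerGen b (c + n - 1) x)).det := by
  let φ (j : Fin n) : R⟦X⟧ →ₗ[R] R := coeff (m + (j : ℕ))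
  let q (i : Fin n) : Polynomial R := (1 + -b • .X) ^ (n - 1 - i)
  have hq (i : Fin n) : (q i).natDegree ≤ n - 1 - i := by
    have : (q i).natDegree ≤ (n - 1 - i) * 1 :=
      Polynomial.natDegree_pow_le_of_le _ (by compute_degree)
    rwa [mul_one] at this
  have hq₀ (i : Fin n) : (q i).coeff 0 = 1 := by
    simp [q, Polynomial.coeff_zero_eq_eval_zero]
  have hpow (i : Fin n) : xDivOneSub b ^ (i : ℕ) * meixnerGen b c x =
      X ^ (i : ℕ) * Polynomial.aeval X (q i) * meixnerGen b (c + n - 1) x := by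
    have hc : c + (i : ℕ) + (n - 1 - i : ℕ) = c + n - 1 := by
      rw [Nat.sub_sub, Nat.cast_sub (by omega)]
      push_cast
      ring
    rw [xDivOneSub_pow_mul_meixnerGen b c x i (n - 1 - i), hc]
    simp [q]
  calc
    _ = (of fun i j : Fin n =>
          φ j ((1 + xDivOneSub b) ^ (i : ℕ) * meixnerGen b c x)).det := by
      simp only [meixnerGen_add_natCast, φ]
    _ = (of fun i j : Fin n => φ j (xDivOneSub b ^ (i : ℕ) * meixnerGen b c x)).det :=
      det_one_add_pow_mul φ _ _
    _ = (of fun i j : Fin n =>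
          φ j (X ^ (i : ℕ) * Polynomial.aeval X (q i) * meixnerGen b (c + n - 1) x)).det := by
      simp only [hpow]
    _ = _ := det_pow_mul_aeval_mul hq₀ hq φ _ _

theorem det_coeff_meixnerGen_symm (b c x : R) (n m : ℕ) :
    (of fun i j : Fin n => coeff (m + (j : ℕ)) (meixnerGen b (c - n - m) (x + (i : ℕ)))).det =
      (-1) ^ (n * m) * (of fun i j : Fin m =>
        coeff (n + (j : ℕ)) (meixnerGen b (2 - c) (-x + (i : ℕ)))).det := by
  have hinv : meixnerGen b (c - n - m + n - 1) x * meixnerGen b (2 - c + m - 1) (-x) = 1 := by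
    rw [meixnerGen_mul_meixnerGen, ← meixnerGen_zero_zero b]
    congr 1 <;> ring
  rw [det_coeff_meixnerGen_add_natCast, det_coeff_meixnerGen_add_natCast,
    det_coeff_X_pow_mul_of_mul_eq_one n m hinv, constantCoeff_meixnerGen, one_pow, mul_one]

end MeixnerGen

section Meixner

lemma gbinom_eq_choose (x : ℝ) (k : ℕ) : gbinom x k = Ring.choose x k := by
  have hprod : (descPochhammer ℤ k).smeval x = ∏ i ∈ Finset.range k, (x - i) := by
    rw [← Polynomial.aeval_eq_smeval, Polynomial.aeval_def, ← Polynomial.eval_map,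
      descPochhammer_map, descPochhammer_eval_eq_prod_range]
  rw [Ring.choose_eq_smul, hprod, gbinom, smul_eq_mul, div_eq_inv_mul]

lemma poch_eq_gbinom_neg (y : ℝ) (k : ℕ) :
    poch y k = (-1) ^ k * k.factorial * gbinom (-y) k := by
  have hprod : poch y k = (-1) ^ k * ∏ i ∈ Finset.range k, (-y - i) := by
    rw [poch, ← Finset.card_range k, ← Finset.prod_const, Finset.card_range,
      ← Finset.prod_mul_distrib]
    exact Finset.prod_congr rfl fun i _ => by ring
  rw [hprod, gbinom]
  field_simp

theorem meixner_eq_coeff_meixnerGen (a c x : ℝ) (n : ℕ) :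
    meixner a c n x = coeff n (meixnerGen (1 - 1 / a)⁻¹ c x) := by
  rw [meixnerGen, coeff_mul_oneAddPow (constantCoeff_xDivOneSub _), meixner, Finset.mul_sum]
  refine Finset.sum_congr rfl fun j hj => ?_
  have hjn : j ≤ n := Finset.mem_range_succ_iff.1 hj
  have hcoeff (b : ℝ) : coeff n (oneAddPow (-b • X) (-c) * xDivOneSub b ^ j) =
      (-b) ^ (n - j) * Ring.choose (-(c + j)) (n - j) := by
    rw [xDivOneSub_pow, mul_left_comm, ← oneAddPow_add (.smul_X' _), ← neg_add, coeff_X_pow_mul',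
      if_pos hjn, coeff_oneAddPow_smul_X]
  have hzpow : (1 - 1 / a) ^ ((j : ℤ) - n) = (1 - 1 / a)⁻¹ ^ (n - j) := by
    rw [← neg_sub (n : ℤ) j, ← Nat.cast_sub hjn, ← inv_zpow', zpow_natCast]
  rw [hcoeff, hzpow, poch_eq_gbinom_neg, gbinom_eq_choose, gbinom_eq_choose,
    neg_pow (1 - 1 / a)⁻¹, Nat.cast_choose ℝ hjn]
  have := Nat.factorial_ne_zero n
  field_simp

end Meixner

/-- the symmetry of Casorati determinants of Meixner
polynomials. -/
theorem meixner_casorati_symmetry (a : ℝ) (ha0 : a ≠ 0) (ha1 : a ≠ 1)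
    (c x : ℝ) (n m : ℕ) :
    Matrix.det (Matrix.of fun i j : Fin n =>
      meixner a (c - n - m) (m + (j : ℕ)) (x + (i : ℕ)))
    = (-1 : ℝ) ^ (n * m) *
      Matrix.det (Matrix.of fun i j : Fin m =>
        meixner a (2 - c) (n + (j : ℕ)) (-x + (i : ℕ))) := by
  simpa only [meixner_eq_coeff_meixnerGen] using det_coeff_meixnerGen_symm (1 - 1 / a)⁻¹ c x n m
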